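/- Let B be a reflexive real Banach space. Then every nonempty, closed, and convex subset C of B is generalized proximal for Π_C: for every x ∈ B, the set Π_C(x) is nonempty. -/

import Mathlib

open Set Filter

noncomputable section

/-- The normalized duality map `J x = {φ : ⟨φ,x⟩ = ‖x‖² and ‖φ‖ = ‖x‖}`. -/
def dualityMap {B : Type*} [NormedAddCommGroup B] [NormedSpace ℝ B] (x : B) :
    Set (B →L[ℝ] ℝ) :=
  {φ | φ x = ‖x‖ ^ 2 ∧ ‖φ‖ = ‖x‖}

/-- The Lyapunov functional `V(φ,x) = ‖φ‖² - 2⟨φ,x⟩ + ‖x‖²`. -/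
def lyapV {B : Type*} [NormedAddCommGroup B] [NormedSpace ℝ B] (φ : B →L[ℝ] ℝ) (x : B) : ℝ :=
  ‖φ‖ ^ 2 - 2 * φ x + ‖x‖ ^ 2

/-- The generalized projection: the set of minimizers of `V(φ, ·)` over `C`. -/
def genProj {B : Type*} [NormedAddCommGroup B] [NormedSpace ℝ B] (C : Set B)
    (φ : B →L[ℝ] ℝ) : Set B :=
  {u | u ∈ C ∧ ∀ y ∈ C, lyapV φ u ≤ lyapV φ y}

/-- The generalized metric projection `Π_C x = ⋃_{jx ∈ J x} π_C (jx)`. -/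
def genMetricProj {B : Type*} [NormedAddCommGroup B] [NormedSpace ℝ B] (C : Set B) (x : B) :
    Set B :=
  ⋃ φ ∈ dualityMap x, genProj C φ

/-- The metric projection: the set of nearest points to `x` in `C`. -/
def metricProj {B : Type*} [NormedAddCommGroup B] [NormedSpace ℝ B] (C : Set B) (x : B) :
    Set B :=
  {u | u ∈ C ∧ ∀ y ∈ C, ‖x - u‖ ≤ ‖x - y‖}

/-- The set of generalized identical points of `x`. -/
def genIdentical {B : Type*} [NormedAddCommGroup B] [NormedSpace ℝ B] (x : B) : Set B :=
  {y | (dualityMap x ∩ dualityMap y).Nonempty}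

/-!
The direct method of the calculus of variations. A continuous convex function is weakly lower
semicontinuous, because its sublevel sets are closed and convex, hence weakly closed. In a reflexive
space Banach–Alaoglu makes bounded closed convex sets weakly compact, so such a function attains its
minimum on `C` as soon as one of its nonempty sublevel sets in `C` is bounded. For `V(φ, ·)` all of
them are bounded, since `(‖φ‖ - ‖y‖)² ≤ V(φ, y)`; thus `π_C φ` is nonempty for every functional `φ`,
and by Hahn–Banach some `φ` belongs to `J x`.
-/

section LocallyConvex

variable {E β : Type*} (𝕜 : Type*) [RCLike 𝕜] [AddCommGroup E] [Module 𝕜 E] [Module ℝ E]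
  [IsScalarTower ℝ 𝕜 E] [TopologicalSpace E] [IsTopologicalAddGroup E] [ContinuousSMul 𝕜 E]
  [LocallyConvexSpace ℝ E] [LinearOrder β]

theorem lowerSemicontinuousOn_comp_toWeakSpace_symm {s : Set E} {f : E → β}
    (hconv : QuasiconvexOn ℝ s f) (hlsc : LowerSemicontinuousOn f s) :
    LowerSemicontinuousOn (f ∘ (toWeakSpace 𝕜 E).symm) (toWeakSpace 𝕜 E '' s) := by
  rw [lowerSemicontinuousOn_iff_preimage_Iic] at hlsc ⊢
  intro r
  obtain ⟨v, hv, hsv⟩ := hlsc r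
  have hsubconv : Convex ℝ (s ∩ f ⁻¹' Iic r) := hconv r
  have hcomp : (f ∘ (toWeakSpace 𝕜 E).symm) ∘ toWeakSpace 𝕜 E = f :=
    funext fun y => congrArg f ((toWeakSpace 𝕜 E).symm_apply_apply y)
  have hsub : s ∩ closure (s ∩ f ⁻¹' Iic r) = s ∩ f ⁻¹' Iic r := by
    refine Subset.antisymm ?_ (subset_inter inter_subset_left subset_closure)
    rw [hsv]
    exact inter_subset_inter_right s (closure_minimal inter_subset_right hv)
  refine ⟨toWeakSpace 𝕜 E '' closure (s ∩ f ⁻¹' Iic r), ?_, ?_⟩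
  · rw [hsubconv.toWeakSpace_closure 𝕜]
    exact isClosed_closure
  · rw [← image_inter (toWeakSpace 𝕜 E).injective, hsub, ← image_inter_preimage,
      ← preimage_comp, hcomp]

end LocallyConvex

section Reflexive

theorem surjective_inclusionInDoubleDualWeak {𝕜 E : Type*} [NontriviallyNormedField 𝕜]
    [SeminormedAddCommGroup E] [NormedSpace 𝕜 E]
    (hrefl : Function.Surjective (NormedSpace.inclusionInDoubleDual 𝕜 E)) :
    Function.Surjective (NormedSpace.inclusionInDoubleDualWeak 𝕜 E) :=
  StrongDual.toWeakDual.surjective.comp (hrefl.comp (toWeakSpace 𝕜 E).symm.surjective)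

variable {𝕜 E β : Type*} [RCLike 𝕜] [NormedAddCommGroup E] [NormedSpace 𝕜 E]

theorem isCompact_closure_toWeakSpace_image_of_isBounded
    (hrefl : Function.Surjective (NormedSpace.inclusionInDoubleDual 𝕜 E)) {s : Set E}
    (hb : Bornology.IsBounded s) : IsCompact (closure (toWeakSpace 𝕜 E '' s)) := by
  refine NormedSpace.isCompact_closure_of_isBounded 𝕜 E _ ?_ ?_
  · rwa [preimage_image_eq _ (toWeakSpace 𝕜 E).injective]
  · rw [(surjective_inclusionInDoubleDualWeak hrefl).range_eq]
    exact subset_univ _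

variable [NormedSpace ℝ E] [IsScalarTower ℝ 𝕜 E]

theorem isCompact_toWeakSpace_image_of_convex
    (hrefl : Function.Surjective (NormedSpace.inclusionInDoubleDual 𝕜 E)) {s : Set E}
    (hconv : Convex ℝ s) (hclosed : IsClosed s) (hb : Bornology.IsBounded s) :
    IsCompact (toWeakSpace 𝕜 E '' s) := by
  rw [← hclosed.closure_eq, hconv.toWeakSpace_closure 𝕜]
  exact isCompact_closure_toWeakSpace_image_of_isBounded hrefl hb

theorem exists_isMinOn_of_quasiconvexOn [LinearOrder β]
    (hrefl : Function.Surjective (NormedSpace.inclusionInDoubleDual 𝕜 E)) {C : Set E} {f : E → β}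
    (hclosed : IsClosed C) (hconv : QuasiconvexOn ℝ C f) (hlsc : LowerSemicontinuousOn f C)
    {c : E} (hc : c ∈ C) (hb : Bornology.IsBounded {y ∈ C | f y ≤ f c}) :
    ∃ u ∈ C, IsMinOn f C u := by
  let S : Set E := C ∩ f ⁻¹' Iic (f c)
  have hSclosed : IsClosed S := by
    obtain ⟨v, hv, hCv⟩ := lowerSemicontinuousOn_iff_preimage_Iic.1 hlsc (f c)
    have hS : S = C ∩ v := hCv
    exact hS ▸ hclosed.inter hv
  have hcompact : IsCompact (toWeakSpace 𝕜 E '' S) :=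
    isCompact_toWeakSpace_image_of_convex hrefl (hconv (f c)) hSclosed hb
  have hSlsc : LowerSemicontinuousOn (f ∘ (toWeakSpace 𝕜 E).symm) (toWeakSpace 𝕜 E '' S) :=
    (lowerSemicontinuousOn_comp_toWeakSpace_symm 𝕜 hconv hlsc).mono
      (image_mono fun _ hy => hy.1)
  have hne : (toWeakSpace 𝕜 E '' S).Nonempty := ⟨_, mem_image_of_mem _ ⟨hc, le_rfl⟩⟩
  obtain ⟨_, ⟨u, ⟨huC, huc⟩, rfl⟩, hmin⟩ := hSlsc.exists_isMinOn hne hcompact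
  refine ⟨u, huC, fun y hy => ?_⟩
  rcases le_total (f y) (f c) with hyc | hcy
  · simpa using hmin (mem_image_of_mem _ ⟨hy, hyc⟩)
  · exact huc.trans hcy

end Reflexive

section Lyapunov

variable {B : Type*} [NormedAddCommGroup B] [NormedSpace ℝ B]

theorem dualityMap_nonempty (x : B) : (dualityMap x).Nonempty := by
  by_cases hx : ‖x‖ = 0
  · exact ⟨0, by simp [hx], by simp [hx]⟩
  · obtain ⟨g, hg, hgx⟩ := exists_dual_vector ℝ x hx
    exact ⟨‖x‖ • g, by simp [hgx, sq], by simp [norm_smul, hg]⟩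

theorem continuous_lyapV (φ : B →L[ℝ] ℝ) : Continuous (lyapV φ) := by
  unfold lyapV
  fun_prop

theorem convexOn_lyapV (φ : B →L[ℝ] ℝ) : ConvexOn ℝ univ (lyapV φ) := by
  have hsq : ConvexOn ℝ univ fun y : B => ‖y‖ ^ 2 :=
    convexOn_univ_norm.pow (fun _ _ => norm_nonneg _) 2
  have hlin : ConvexOn ℝ univ ((-2 : ℝ) • φ : B →L[ℝ] ℝ) :=
    ((-2 : ℝ) • φ).toLinearMap.convexOn convex_univ
  refine ((hlin.add hsq).add_const (‖φ‖ ^ 2)).congr fun y _ => ?_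
  simp only [lyapV, Pi.add_apply, smul_apply, smul_eq_mul]
  ring

theorem sq_norm_sub_norm_le_lyapV (φ : B →L[ℝ] ℝ) (y : B) : (‖φ‖ - ‖y‖) ^ 2 ≤ lyapV φ y := by
  have hφy : φ y ≤ ‖φ‖ * ‖y‖ := (le_abs_self _).trans (φ.le_opNorm y)
  unfold lyapV
  linarith [sub_sq ‖φ‖ ‖y‖]

theorem isBounded_setOf_lyapV_le (φ : B →L[ℝ] ℝ) (r : ℝ) :
    Bornology.IsBounded {y | lyapV φ y ≤ r} := by
  refine isBounded_iff_forall_norm_le.2 ⟨‖φ‖ + √r, fun y hy => ?_⟩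
  have hdist : |‖φ‖ - ‖y‖| ≤ √r := Real.abs_le_sqrt ((sq_norm_sub_norm_le_lyapV φ y).trans hy)
  linarith [neg_le_of_abs_le hdist]

theorem genProj_nonempty
    (hrefl : Function.Surjective (NormedSpace.inclusionInDoubleDual ℝ B)) {C : Set B}
    (hC : C.Nonempty) (hclosed : IsClosed C) (hconv : Convex ℝ C) (φ : B →L[ℝ] ℝ) :
    (genProj C φ).Nonempty := by
  obtain ⟨c, hc⟩ := hC
  have hquasi : QuasiconvexOn ℝ C (lyapV φ) :=
    ((convexOn_lyapV φ).subset (subset_univ C) hconv).quasiconvexOn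
  have hb : Bornology.IsBounded {y ∈ C | lyapV φ y ≤ lyapV φ c} :=
    (isBounded_setOf_lyapV_le φ _).subset fun _ hy => hy.2
  obtain ⟨u, hu, hmin⟩ := exists_isMinOn_of_quasiconvexOn hrefl hclosed hquasi
    ((continuous_lyapV φ).lowerSemicontinuous.lowerSemicontinuousOn C) hc hb
  exact ⟨u, hu, isMinOn_iff.1 hmin⟩

end Lyapunov

theorem statement_9 {B : Type*} [NormedAddCommGroup B] [NormedSpace ℝ B] [CompleteSpace B]
    (hrefl : Function.Surjective ⇑(NormedSpace.inclusionInDoubleDual ℝ B))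
    (C : Set B) (hC : C.Nonempty) (hclosed : IsClosed C) (hconv : Convex ℝ C)
    (x : B) : (genMetricProj C x).Nonempty := by
  obtain ⟨φ, hφ⟩ := dualityMap_nonempty x
  obtain ⟨u, hu⟩ := genProj_nonempty hrefl hC hclosed hconv φ
  exact ⟨u, mem_biUnion hφ hu⟩
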